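/- Let R > 0, L > R, α ∈ ℝ ∖ {0}, y_1,…,y_m ∈ ℝ², and let 𝒩, Φ̂, ρ be the particle counting function, normalized flux and effective coupling, with 𝒩'(r) := Σ_l f(|y_l|, r). Fix 0 < C < √(π/2). Call an open interval I = (z⁻, z⁺) ⊆ (R, L] bad if: 𝒩(z⁻), 𝒩(z⁺) ∈ ℤ; 𝒩(r) ∉ ℤ on I; ρ vanishes at some point of I and ρ(r) = |Φ̂(r) − 2q|² on I for a fixed q ∈ ℤ; |I| < CR; and inf_I 𝒩' < (C²/π) sup_I 𝒩'. Then for every interval J ⊆ (R, L] of length |J| = R/2, the Lebesgue measure of J ∩ ⋃{I : I bad} is less than (8C(π − C²)/(π − 2C²)) · |J|. (Bad intervals, Lemma 4.10.) -/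

import Mathlib

/-!
Put `ε = C² / π < 1 / 2` and `g = 𝒩'`. Two facts about `g` drive the argument. First, `g` really is
the derivative of `𝒩` beyond `R` (`countN_sub`, by polar coordinates around the origin). Second, `g`
satisfies a three-point inequality `g v ≤ g u + g w` whenever `R < u ≤ v ≤ w ≤ u + R / 2`
(`profile_three`): up to a constant, `f(d, r)` is the length of the arc of the circle of radius `r`
inside a disk of radius `R`, and such lengths can be compared through their chords.

`𝒩` increases by exactly one across a bad interval `I`, so bad intervals are disjoint, ordered by
the integer `𝒩(I.1)`, and `1 ≤ S |I|` where `S = sup_I g`. As `g` takes values near `S` and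
near `inf_I g < ε S` in `I`, the three-point inequality forbids `g` to be below `(1 - ε) S` both
somewhere to the right and somewhere to the left of `I` in its window of length `R / 2`
(`IsBad.isUp_or_isDown`). Suppose `g ≥ (1 - ε) S` on the right. Then a bad interval `J` further
right in the window has length at most `1 / ((1 - ε) S)`, and its infimum is at least `(1 - ε) S`,
so `sup_J g ≥ ((1 - ε) / ε) S`. Hence the bounds on successive lengths of this kind decay
geometrically, and those in a window of length `R / 2` cover less than
`C R (2 - 2ε) / (1 - 2ε)` (`GrowingFamily.volume_window`). The intervals of the other kind are
handled by reflection. The sum of the two bounds is the asserted one.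
-/

open MeasureTheory Real Set

noncomputable section

/-- The plane `ℝ²`. -/
abbrev Plane : Type := EuclideanSpace ℝ (Fin 2)

/-- The particle counting function `𝒩(r) = Σ_l |B_r(0) ∩ B_R(y_l)| / (πR²)`. -/
def countN (R : ℝ) {m : ℕ} (y : Fin m → Plane) (r : ℝ) : ℝ :=
  ∑ l : Fin m, (volume (Metric.ball (0 : Plane) r ∩ Metric.ball (y l) R)).toReal / (π * R ^ 2)

/-- The effective coupling `ρ(r) = min_{q ∈ ℤ} |Φ̂(r) - 2q|²` for the normalized flux
`Φ̂(r) = α(1 + 2𝒩(r))`. -/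
def rhoFun (α R : ℝ) {m : ℕ} (y : Fin m → Plane) (r : ℝ) : ℝ :=
  sInf {t : ℝ | ∃ q : ℤ, t = (α * (1 + 2 * countN R y r) - 2 * q) ^ 2}

/-- The one-particle profile `f(d,r)`: `2r/R²` for `r ≤ R - d`; `0` for `r > R + d` or
`r < d - R`; and `(2r/(πR²)) arccos((d²+r²-R²)/(2dr))` otherwise, so that
`𝒩'(r) = Σ_l f(|y_l|, r)` is the a.e. derivative of `𝒩`. -/
def profile (R d r : ℝ) : ℝ :=
  if r ≤ R - d then 2 * r / R ^ 2
  else if R + d < r ∨ r < d - R then 0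
  else 2 * r / (π * R ^ 2) * Real.arccos ((d ^ 2 + r ^ 2 - R ^ 2) / (2 * d * r))

/-- `𝒩'(r) = Σ_l f(|y_l|, r)`. -/
def countN' (R : ℝ) {m : ℕ} (y : Fin m → Plane) (r : ℝ) : ℝ :=
  ∑ l : Fin m, profile R ‖y l‖ r

/-! ### A three-point inequality for circular arcs -/

/-- For the circle of radius `r` about the origin and a unit disk whose centre is at distance `d`,
the cosine of half the angle subtended by the arc of the circle inside the disk. Values above `1`
mean that the arc is empty, and `arccos` then returns `0`, as it should. -/
def arcCos (d r : ℝ) : ℝ := (d ^ 2 + r ^ 2 - 1) / (2 * d * r)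

lemma arccos_eq_zero_of_far {d r : ℝ} (hd : 0 < d) (hr : 0 < r) (h : 1 ≤ (r - d) ^ 2) :
    arccos (arcCos d r) = 0 := by
  rw [arccos_eq_zero, arcCos, le_div_iff₀ (by positivity)]
  nlinarith

lemma arcCos_nonneg {d r : ℝ} (hd : 0 < d) (hr : 1 ≤ r) : 0 ≤ arcCos d r := by
  unfold arcCos
  have : 0 ≤ d ^ 2 + r ^ 2 - 1 := by nlinarith [sq_nonneg d]
  positivity

/-- The half-angle formula turns the squared half-chord into a cubic polynomial in `r`, up to the
factor `4 * d`; this is what makes the arc lengths comparable. -/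
lemma sq_mul_sin_half {d r : ℝ} (hd : 0 < d) (hr : 1 ≤ r) (h : (r - d) ^ 2 ≤ 1) :
    (r * sin (arccos (arcCos d r) / 2)) ^ 2 = r * (1 - (r - d) ^ 2) / (4 * d) := by
  have h1 : arcCos d r ≤ 1 := by
    rw [arcCos, div_le_iff₀ (by positivity)]; nlinarith
  have hc : cos (arccos (arcCos d r)) = arcCos d r :=
    cos_arccos (by linarith [arcCos_nonneg hd hr]) h1
  have h2 := Real.cos_sq' (arccos (arcCos d r) / 2)
  have h5 := Real.cos_two_mul (arccos (arcCos d r) / 2)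
  rw [mul_div_cancel₀ _ (two_ne_zero), hc] at h5
  have h3 := Real.sin_sq_add_cos_sq (arccos (arcCos d r) / 2)
  have h4 : sin (arccos (arcCos d r) / 2) ^ 2 = (1 - arcCos d r) / 2 := by
    linarith
  rw [mul_pow, h4, arcCos]
  field_simp
  ring

/-- `sin x / x` is decreasing on `(0, π]`, by concavity of `sin`. -/
lemma mul_sin_le_mul_sin {x y : ℝ} (hx : 0 ≤ x) (hxy : x ≤ y) (hy : y ≤ π) :
    x * sin y ≤ y * sin x := by
  rcases hx.eq_or_lt with rfl | hx'
  · simp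
  have hy0 : 0 < y := hx'.trans_le hxy
  have h := strictConcaveOn_sin_Icc.concaveOn.2 (show (0 : ℝ) ∈ Icc 0 π from ⟨le_rfl, pi_pos.le⟩)
    (show y ∈ Icc 0 π from ⟨hy0.le, hy⟩)
    (show 0 ≤ 1 - x / y by rw [sub_nonneg, div_le_one hy0]; exact hxy)
    (show 0 ≤ x / y by positivity) (by ring)
  simp only [smul_eq_mul, mul_zero, sin_zero, zero_add] at h
  rw [div_mul_cancel₀ _ hy0.ne', div_mul_eq_mul_div, div_le_iff₀ hy0] at h
  linarith

/-- The quotient `x / sin x` is at most its value `√2 π / 4 ≈ 1.1107` at `π / 4`. A half-angle lies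
in `[0, π / 4]` because the arc subtends at most `π` when `r ≥ 1`. -/
lemma le_mul_sin {x : ℝ} (hx : 0 ≤ x) (hx4 : x ≤ π / 4) : x ≤ 1.115 * sin x := by
  have h := mul_sin_le_mul_sin hx hx4 (by linarith [pi_pos])
  rw [sin_pi_div_four] at h
  have h2 : (1.414 : ℝ) ≤ √2 := Real.le_sqrt_of_sq_le (by norm_num)
  have hs : 0 ≤ sin x := sin_nonneg_of_nonneg_of_le_pi hx (by linarith [pi_pos])
  have := pi_lt_d4
  nlinarith [mul_nonneg hs (sub_nonneg.2 this.le), mul_nonneg hx (sub_nonneg.2 h2)]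

/-- The three-point inequality for squared half-chords when the disk's centre lies inside the
smallest circle. The factor `0.8` leaves room for replacing chords by angles: `√0.8 * 1.115 < 1`. -/
lemma cubic_right {d u v w : ℝ} (hdu : d ≤ u) (hu : 1 ≤ u) (huv : u ≤ v) (hvw : v ≤ w)
    (hwu : w ≤ u + 1 / 2) (hwd : (w - d) ^ 2 ≤ 1) :
    v * (1 - (v - d) ^ 2) ≤ u * (1 - (u - d) ^ 2) + 0.8 * (w * (1 - (w - d) ^ 2)) := by
  have hw1 : 1 ≤ w := by linarith
  have e : v * (1 - (v - d) ^ 2) - u * (1 - (u - d) ^ 2)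
      = (v - u) * (1 - (u - d) ^ 2 - v * (2 * (u - d) + (v - u))) := by ring
  have e2 : 0 ≤ w * (1 - (w - d) ^ 2) := mul_nonneg (by linarith) (by linarith)
  have e3 : 1 - (u - d) ^ 2 - v * (2 * (u - d) + (v - u))
      ≤ 1 - (u - d) ^ 2 - 2 * (u - d) := by
    have := mul_nonneg (show 0 ≤ v - 1 by linarith) (show 0 ≤ 2 * (u - d) + (v - u) by linarith)
    linarith
  have e4 := mul_le_mul_of_nonneg_left e3 (sub_nonneg.2 huv)
  rcases le_total (1 - (u - d) ^ 2 - 2 * (u - d)) 0 with h | h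
  · have := mul_nonneg (sub_nonneg.2 huv) (neg_nonneg.2 h)
    linarith
  · have e5 := mul_le_mul_of_nonneg_right (show v - u ≤ 1 / 2 by linarith) h
    have e6 : (w - d) ^ 2 ≤ (u - d + 1 / 2) ^ 2 := by
      apply pow_le_pow_left₀ <;> linarith
    have e7 : 1 - (w - d) ^ 2 ≤ w * (1 - (w - d) ^ 2) := le_mul_of_one_le_left (by linarith) hw1
    have e8 : u - d ≤ 1 / 2 := by nlinarith
    nlinarith

/-- Squared half-chord comparison when the disk's centre lies outside the smallest circle. The
hypothesis `d ^ 2 - 1 ≤ v * w` says that the half-angle at `w` is at most the one at `v`. The two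
factors are chosen so that `0.3 + 0.85 ≥ 1.115`. -/
lemma cubic_left {d u v w : ℝ} (hdu : u < d) (hu : 1 ≤ u) (huv : u ≤ v) (hvw : v ≤ w)
    (hwu : w ≤ u + 1 / 2) (hvd : (v - d) ^ 2 ≤ 1) (hvw2 : d ^ 2 - 1 ≤ v * w) :
    0.3 ^ 2 * (v * (1 - (v - d) ^ 2)) ≤ u * (1 - (u - d) ^ 2) ∧
    0.85 ^ 2 * (v * (1 - (v - d) ^ 2)) ≤ w * (1 - (w - d) ^ 2) := by
  have h1 : 0 ≤ 1 - (v - d) ^ 2 := by linarith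
  have h2 : 1 - (v - d) ^ 2 ≤ 1 := by linarith [sq_nonneg (v - d)]
  have hdu' : d - u ≤ 0.93 := by
    by_contra! h
    have a1 : v * w ≤ (u + 1 / 2) * (u + 1 / 2) :=
      mul_le_mul (by linarith) (by linarith) (by linarith) (by linarith)
    have a2 : (u + 0.93) ^ 2 ≤ d ^ 2 := pow_le_pow_left₀ (by linarith) (by linarith) 2
    nlinarith
  constructor
  · have a1 : (u - d) ^ 2 ≤ 0.93 ^ 2 := by
      rw [← neg_sub, neg_sq]
      exact pow_le_pow_left₀ (by linarith) (by linarith) 2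
    have a2 : v * (1 - (v - d) ^ 2) ≤ 3 / 2 * u * 1 := by
      apply mul_le_mul _ h2 h1 <;> linarith
    have a3 := mul_le_mul_of_nonneg_left a1 (show 0 ≤ u by linarith)
    linarith
  · have a1 : 0.85 ^ 2 * (1 - (v - d) ^ 2) ≤ 1 - (w - d) ^ 2 := by
      rcases le_total w d with h | h
      · have : (w - d) ^ 2 ≤ (v - d) ^ 2 := by
          rw [sub_sq_comm w, sub_sq_comm v]
          exact pow_le_pow_left₀ (by linarith) (by linarith) 2
        linarith
      · have : (w - d) ^ 2 ≤ (1 / 2) ^ 2 := pow_le_pow_left₀ (by linarith) (by linarith) 2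
        linarith
    have a2 := mul_le_mul_of_nonneg_left a1 (show 0 ≤ v by linarith)
    have a3 : v * (1 - (w - d) ^ 2) ≤ w * (1 - (w - d) ^ 2) :=
      mul_le_mul_of_nonneg_right hvw (by linarith)
    linarith

set_option maxHeartbeats 1000000 in
/-- The three-point inequality for arc lengths inside a unit disk when all three circles meet the
closed disk. Arc lengths are compared through half-chords `r * sin (θ / 2)`. -/
lemma arc_core {d u v w : ℝ} (hd : 0 < d) (hu : 1 ≤ u) (huv : u ≤ v) (hvw : v ≤ w)
    (hwu : w ≤ u + 1 / 2) (hud : (u - d) ^ 2 ≤ 1) (hvd : (v - d) ^ 2 ≤ 1) (hwd : (w - d) ^ 2 ≤ 1) :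
    v * arccos (arcCos d v) ≤ u * arccos (arcCos d u) + w * arccos (arcCos d w) := by
  have hv1 : 1 ≤ v := hu.trans huv
  have hw1 : 1 ≤ w := hv1.trans hvw
  have key : ∀ r, 1 ≤ r → 0 ≤ arccos (arcCos d r) / 2 ∧ arccos (arcCos d r) / 2 ≤ π / 4 ∧
      0 ≤ sin (arccos (arcCos d r) / 2) ∧
      sin (arccos (arcCos d r) / 2) ≤ arccos (arcCos d r) / 2 := by
    intro r hr
    have h0 := arccos_nonneg (arcCos d r)
    have h1 := arccos_le_pi_div_two.2 (arcCos_nonneg hd hr)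
    refine ⟨by linarith, by linarith,
      sin_nonneg_of_nonneg_of_le_pi (by linarith) (by linarith [pi_pos]), sin_le (by linarith)⟩
  have Su := sq_mul_sin_half hd hu hud
  have Sv := sq_mul_sin_half hd hv1 hvd
  have Sw := sq_mul_sin_half hd hw1 hwd
  obtain ⟨xu0, xu4, su0, sux⟩ := key u hu
  obtain ⟨xv0, xv4, sv0, svx⟩ := key v hv1
  obtain ⟨xw0, xw4, sw0, swx⟩ := key w hw1
  -- if the angle at `w` is at least the angle at `v`, the `w`-term alone suffices
  by_cases hθw : arccos (arcCos d v) ≤ arccos (arcCos d w)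
  · have := mul_le_mul hvw hθw (arccos_nonneg _) (by linarith)
    nlinarith
  rw [not_le] at hθw
  have hcw : arcCos d v ≤ arcCos d w := by
    by_contra! h
    exact absurd (arccos_le_arccos h.le) (not_le.2 hθw)
  suffices v * (arccos (arcCos d v) / 2) ≤ u * (arccos (arcCos d u) / 2)
      + w * (arccos (arcCos d w) / 2) by linarith
  by_cases hdu : d ≤ u
  · -- the centre is inside the smallest circle: angles decrease, so `x / sin x` at `u` dominates
    -- its value at `v`, and only the `w`-term loses the factor `1.115`
    have hcu : arcCos d u ≤ arcCos d v := by
      unfold arcCos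
      rw [div_le_div_iff₀ (by positivity) (by positivity)]
      nlinarith [mul_nonneg (mul_nonneg hd.le (sub_nonneg.2 huv))
        (show 0 ≤ u * v - d ^ 2 + 1 by nlinarith)]
    have hθ := arccos_le_arccos hcu
    set xu := arccos (arcCos d u) / 2
    set xv := arccos (arcCos d v) / 2
    set xw := arccos (arcCos d w) / 2
    have h1 := mul_sin_le_mul_sin xv0 (show xv ≤ xu by simp only [xu, xv]; linarith)
      (by linarith [pi_pos])
    have h2 := le_mul_sin xv0 xv4
    have hG : v * (1 - (v - d) ^ 2) ≤ u * (1 - (u - d) ^ 2) + 0.8 * (w * (1 - (w - d) ^ 2)) :=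
      cubic_right hdu hu huv hvw hwu hwd
    have h3 : v * sin xv ≤ u * sin xu + 0.896 * (w * sin xw) := by
      refine le_of_sq_le_sq ?_ (by positivity)
      have : (v * sin xv) ^ 2 ≤ (u * sin xu) ^ 2 + 0.8 * (w * sin xw) ^ 2 := by
        rw [Su, Sv, Sw, ← mul_div_assoc, ← add_div]
        exact div_le_div_of_nonneg_right hG (by positivity)
      have h5 : 0 ≤ (u * sin xu) * (w * sin xw) := by positivity
      nlinarith [sq_nonneg (w * sin xw)]
    rcases sv0.eq_or_lt with h0 | h0
    · have : xv ≤ 0 := by rw [← h0] at h2; linarith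
      have : xv = 0 := le_antisymm this xv0
      rw [this, mul_zero]; positivity
    · have h4 : v * sin xv * xv ≤ (u * xu + w * xw) * sin xv := by
        have a1 := mul_le_mul_of_nonneg_right h3 xv0
        have a2 : u * (xv * sin xu) ≤ u * (xu * sin xv) := by gcongr
        have a3 : w * (sin xw * xv) ≤ w * (xw * (1.115 * sin xv)) := by gcongr
        have a4 : 0 ≤ w * (xw * sin xv) := by positivity
        linarith
      exact le_of_mul_le_mul_right (by linarith) h0
  · rw [not_le] at hdu
    have hvw' : v < w := by
      rcases hvw.eq_or_lt with h | h
      · rw [h] at hθw; exact absurd hθw (lt_irrefl _)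
      · exact h
    have hvw2 : d ^ 2 - 1 ≤ v * w := by
      unfold arcCos at hcw
      rw [div_le_div_iff₀ (by positivity) (by positivity)] at hcw
      have : 0 ≤ (2 * d) * ((w - v) * (v * w - d ^ 2 + 1)) := by nlinarith
      have := nonneg_of_mul_nonneg_right this (by positivity)
      have := nonneg_of_mul_nonneg_right this (by linarith)
      linarith
    obtain ⟨hGu, hGw⟩ := cubic_left hdu hu huv hvw hwu hvd hvw2
    have hu3 : 0.3 * (v * sin (arccos (arcCos d v) / 2)) ≤ u * sin (arccos (arcCos d u) / 2) := by
      refine le_of_sq_le_sq ?_ (by positivity)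
      rw [mul_pow, Su, Sv, ← mul_div_assoc]
      exact div_le_div_of_nonneg_right hGu (by positivity)
    have hw3 : 0.85 * (v * sin (arccos (arcCos d v) / 2)) ≤ w * sin (arccos (arcCos d w) / 2) := by
      refine le_of_sq_le_sq ?_ (by positivity)
      rw [mul_pow, Sw, Sv, ← mul_div_assoc]
      exact div_le_div_of_nonneg_right hGw (by positivity)
    have h2 := le_mul_sin xv0 xv4
    have b1 := mul_le_mul_of_nonneg_left h2 (show 0 ≤ v by linarith)
    have b2 := mul_le_mul_of_nonneg_left sux (show 0 ≤ u by linarith)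
    have b3 := mul_le_mul_of_nonneg_left swx (show 0 ≤ w by linarith)
    have b4 := mul_nonneg (show 0 ≤ v by linarith) sv0
    linarith

/-- The three-point inequality for arc lengths. Radii outside `[d - 1, d + 1]` carry no arc, so `u`
and `w` may be clamped to that range. -/
lemma arc_le {d u v w : ℝ} (hd : 0 < d) (hu : 1 ≤ u) (huv : u ≤ v) (hvw : v ≤ w)
    (hwu : w ≤ u + 1 / 2) :
    v * arccos (arcCos d v) ≤ u * arccos (arcCos d u) + w * arccos (arcCos d w) := by
  have nn : ∀ r, 1 ≤ r → 0 ≤ r * arccos (arcCos d r) := fun r hr =>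
    mul_nonneg (by linarith) (arccos_nonneg _)
  have nu := nn u hu
  have nw := nn w (by linarith)
  rcases le_or_gt 1 ((v - d) ^ 2) with h | h
  · rw [arccos_eq_zero_of_far hd (by linarith) h]; linarith
  have hv := abs_lt_of_sq_lt_sq (a := v - d) (b := 1) (by simpa using h) (by norm_num)
  rw [abs_lt] at hv
  have hu' : max u (d - 1) * arccos (arcCos d (max u (d - 1))) ≤ u * arccos (arcCos d u) := by
    rcases le_total (d - 1) u with h | h
    · rw [max_eq_left h]
    · rw [max_eq_right h, arccos_eq_zero_of_far hd (by linarith) (by norm_num)]; simpa using nu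
  have hw' : min w (d + 1) * arccos (arcCos d (min w (d + 1))) ≤ w * arccos (arcCos d w) := by
    rcases le_total w (d + 1) with h | h
    · rw [min_eq_left h]
    · rw [min_eq_right h, arccos_eq_zero_of_far hd (by linarith) (by norm_num)]; simpa using nw
  have a1 : u ≤ max u (d - 1) := le_max_left _ _
  have a2 : d - 1 ≤ max u (d - 1) := le_max_right _ _
  have a3 : max u (d - 1) ≤ v := max_le huv (by linarith)
  have a4 : min w (d + 1) ≤ w := min_le_left _ _
  have a5 : min w (d + 1) ≤ d + 1 := min_le_right _ _
  have a6 : v ≤ min w (d + 1) := le_min hvw (by linarith)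
  have := arc_core (d := d) (u := max u (d - 1)) (v := v) (w := min w (d + 1)) hd
    (by linarith) a3 a6 (by linarith)
    ((sq_le_one_iff_abs_le_one _).2 (abs_le.2 ⟨by linarith, by linarith⟩)) h.le
    ((sq_le_one_iff_abs_le_one _).2 (abs_le.2 ⟨by linarith, by linarith⟩))
  linarith

/-! ### The derivative of the counting function -/

/-- The angular measure of the part of a circle seen inside a disk. -/
lemma volume_cos_gt {c : ℝ} (hc : -1 ≤ c) :
    volume (Ioo (-π) π ∩ {φ | c < cos φ}) = ENNReal.ofReal (2 * arccos c) := by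
  have : Ioo (-π) π ∩ {φ | c < cos φ} = Ioo (-arccos c) (arccos c) := by
    ext φ
    simp only [mem_inter_iff, mem_Ioo, mem_ofPred_eq, ← abs_lt]
    constructor
    · rintro ⟨h1, h2⟩
      by_contra! h
      have := cos_le_cos_of_nonneg_of_le_pi (arccos_nonneg c) h1.le h
      rw [cos_abs] at this
      rcases le_total c 1 with h3 | h3
      · rw [cos_arccos hc h3] at this; linarith
      · linarith [cos_le_one φ]
    · intro h
      have h1 : |φ| < π := h.trans_le (arccos_le_pi c)
      refine ⟨h1, ?_⟩
      have h0 : 0 < arccos c := (abs_nonneg φ).trans_lt h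
      have h3 : c < 1 := by simpa using h0
      have := cos_lt_cos_of_nonneg_of_le_pi (abs_nonneg φ) (arccos_le_pi c) h
      rwa [cos_abs, cos_arccos hc h3.le] at this
  rw [this, Real.volume_Ioo]
  congr 1; ring

/-- A rotation identifies the plane with `ℂ` with a given centre on the
nonnegative real axis. -/
lemma exists_plane_iso (y : Plane) :
    ∃ e : ℂ ≃ₗᵢ[ℝ] Plane, e (‖y‖ : ℂ) = y := by
  let e₀ : ℂ ≃ₗᵢ[ℝ] Plane := Complex.orthonormalBasisOneI.repr
  by_cases hy : y = 0
  · exact ⟨e₀, by simp [hy]⟩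
  have hz : e₀.symm y ≠ 0 := by simpa using hy
  have hn : ‖e₀.symm y‖ = ‖y‖ := e₀.symm.norm_map y
  let b : Circle := ⟨e₀.symm y / ‖y‖, by
    rw [Submonoid.unitSphere, ← SetLike.mem_coe]
    simp [hn, hy]⟩
  refine ⟨(rotation b).trans e₀, ?_⟩
  have : rotation b (‖y‖ : ℂ) = e₀.symm y := by
    rw [rotation_apply]
    have : ((‖y‖ : ℝ) : ℂ) ≠ 0 := by simpa using hy
    simp only [b]
    field_simp
  simp [this]

lemma dist_polar_lt {s φ d R : ℝ} (hs : 0 < s) (hd : 0 < d) (hR : 0 < R) :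
    ‖(Complex.polarCoord.symm (s, φ) : ℂ) - (d : ℂ)‖ < R ↔
      (d ^ 2 + s ^ 2 - R ^ 2) / (2 * d * s) < cos φ := by
  have h : ‖(Complex.polarCoord.symm (s, φ) : ℂ) - (d : ℂ)‖ ^ 2
      = s ^ 2 + d ^ 2 - 2 * d * s * cos φ := by
    rw [Complex.sq_norm, Complex.normSq_apply, Complex.polarCoord_symm_apply]
    simp only [Complex.sub_re, Complex.sub_im, Complex.mul_re, Complex.mul_im, Complex.ofReal_re,
      Complex.ofReal_im, Complex.add_re, Complex.add_im, Complex.I_re, Complex.I_im]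
    have := sin_sq_add_cos_sq φ
    linear_combination s ^ 2 * this
  rw [← sq_lt_sq₀ (norm_nonneg _) hR.le, h, div_lt_iff₀ (by positivity)]
  constructor <;> intro h <;> linarith

/-- The part of a disk between two circles about the origin, measured in polar coordinates. -/
lemma volume_annulus {R d p q : ℝ} (hR : 0 < R) (hd : 0 < d) (hp : R ≤ p) :
    volume {z : ℂ | ‖z‖ ∈ Ico p q ∧ ‖z - d‖ < R} =
      ∫⁻ s in Ico p q,
        ENNReal.ofReal (2 * s * arccos ((d ^ 2 + s ^ 2 - R ^ 2) / (2 * d * s))) := by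
  have hm : MeasurableSet {z : ℂ | ‖z‖ ∈ Ico p q ∧ ‖z - d‖ < R} :=
    (measurableSet_Ico.preimage measurable_norm).inter
      (measurableSet_lt (f := fun z : ℂ => ‖z - d‖) (by fun_prop) measurable_const)
  rw [← lintegral_indicator_one hm, ← Complex.lintegral_comp_polarCoord_symm, polarCoord_target,
    Measure.volume_eq_prod]
  have hcs : Measurable fun x : ℝ × ℝ => (Complex.polarCoord.symm x : ℂ) := by
    simp only [Complex.polarCoord_symm_apply]
    fun_prop
  rw [setLIntegral_prod _ (Measurable.aemeasurable (by
    exact Measurable.mul (f := fun x : ℝ × ℝ => ENNReal.ofReal x.1) (by fun_prop)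
      ((measurable_one.indicator hm).comp hcs)))]
  rw [← lintegral_indicator measurableSet_Ioi, ← lintegral_indicator measurableSet_Ico]
  congr 1
  ext s
  by_cases hs : s ∈ Ico p q
  · have hs0 : 0 < s := hR.trans_le (hp.trans hs.1)
    rw [indicator_of_mem (show s ∈ Ioi 0 from hs0), indicator_of_mem hs]
    have hc : -1 ≤ (d ^ 2 + s ^ 2 - R ^ 2) / (2 * d * s) := by
      have : 0 ≤ (d ^ 2 + s ^ 2 - R ^ 2) := by nlinarith [hs.1]
      have : 0 ≤ (d ^ 2 + s ^ 2 - R ^ 2) / (2 * d * s) := by positivity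
      linarith
    have hv := volume_cos_gt hc
    have hm2 : MeasurableSet {φ : ℝ | (d ^ 2 + s ^ 2 - R ^ 2) / (2 * d * s) < cos φ} :=
      measurableSet_lt measurable_const (by fun_prop)
    have : ∀ φ, ({z : ℂ | ‖z‖ ∈ Ico p q ∧ ‖z - d‖ < R}.indicator (1 : ℂ → ENNReal)
        (Complex.polarCoord.symm (s, φ))) =
        {φ : ℝ | (d ^ 2 + s ^ 2 - R ^ 2) / (2 * d * s) < cos φ}.indicator (fun _ => 1) φ := by
      intro φ
      simp only [indicator_apply, mem_ofPred_eq, dist_polar_lt hs0 hd hR,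
        Complex.norm_polarCoord_symm,
        abs_of_pos hs0, hs, true_and, Pi.one_apply]
    simp only [this, smul_eq_mul]
    rw [lintegral_const_mul _ (measurable_const.indicator hm2), lintegral_indicator hm2,
      setLIntegral_const, one_mul, Measure.restrict_apply hm2, inter_comm, hv,
      ← ENNReal.ofReal_mul hs0.le]
    congr 1; ring
  · rw [indicator_of_notMem hs]
    by_cases hs0 : s ∈ Ioi (0 : ℝ)
    · rw [indicator_of_mem hs0]
      have : ∀ φ, ({z : ℂ | ‖z‖ ∈ Ico p q ∧ ‖z - d‖ < R}.indicator (1 : ℂ → ENNReal)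
          (Complex.polarCoord.symm (s, φ))) = 0 := by
        intro φ
        apply indicator_of_notMem
        simp only [mem_ofPred_eq, Complex.norm_polarCoord_symm,
          abs_of_pos (show 0 < s from hs0), hs, false_and, not_false_eq_true]
      simp only [this, smul_zero, lintegral_zero]
    · rw [indicator_of_notMem hs0]

/-- For `r ≥ R` and `d > 0` the case distinction in `profile` is absorbed by `arccos`, which
vanishes above `1`. -/
lemma profile_eq {R d r : ℝ} (hR : 0 < R) (hd : 0 < d) (hr : R ≤ r) :
    profile R d r
      = 2 * r / (π * R ^ 2) * arccos ((d ^ 2 + r ^ 2 - R ^ 2) / (2 * d * r)) := by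
  have hr0 : 0 < r := hR.trans_le hr
  unfold profile
  rw [if_neg (by linarith)]
  split_ifs with h
  · have : arccos ((d ^ 2 + r ^ 2 - R ^ 2) / (2 * d * r)) = 0 := by
      rw [arccos_eq_zero, le_div_iff₀ (by positivity)]
      rcases h with h | h <;> nlinarith
    rw [this, mul_zero]
  · rfl

lemma profile_zero {R r : ℝ} (hr : R < r) : profile R 0 r = 0 := by
  unfold profile
  rw [if_neg (by linarith), if_pos (by left; linarith)]

lemma arcLen_continuousOn {R d : ℝ} (hd : 0 < d) :
    ContinuousOn (fun s : ℝ => arccos ((d ^ 2 + s ^ 2 - R ^ 2) / (2 * d * s))) (Ioi 0) := by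
  apply continuous_arccos.comp_continuousOn
  apply ContinuousOn.div (by fun_prop) (by fun_prop)
  intro s hs
  have : (0 : ℝ) < s := hs
  positivity

lemma profile_intervalIntegrable {R d p q : ℝ} (hR : 0 < R) (hd : 0 ≤ d) (hp : R ≤ p)
    (hpq : p ≤ q) : IntervalIntegrable (profile R d) volume p q := by
  rcases hd.eq_or_lt with rfl | hd
  · refine (IntervalIntegrable.zero (μ := volume) (a := p) (b := q) (E := ℝ)).congr ?_
    intro s hs
    rw [uIoc_of_le hpq] at hs
    simp [profile_zero (hp.trans_lt hs.1)]
  · refine (ContinuousOn.intervalIntegrable (u := fun r => 2 * r / (π * R ^ 2) *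
      arccos ((d ^ 2 + r ^ 2 - R ^ 2) / (2 * d * r))) ?_).congr ?_
    · rw [uIcc_of_le hpq]
      refine ContinuousOn.mul (by fun_prop) ((arcLen_continuousOn hd).mono ?_)
      intro s hs
      exact hR.trans_le (hp.trans hs.1)
    · intro s hs
      rw [uIoc_of_le hpq] at hs
      exact (profile_eq hR hd (hp.trans hs.1.le)).symm

/-- `profile R ‖y‖` is the density of the one-particle term of `countN` on `[R, ∞)`. -/
lemma area_sub {R p q : ℝ} (hR : 0 < R) (hp : R ≤ p) (hpq : p ≤ q) (y : Plane) :
    (volume (Metric.ball (0 : Plane) q ∩ Metric.ball y R)).toReal / (π * R ^ 2)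
      - (volume (Metric.ball (0 : Plane) p ∩ Metric.ball y R)).toReal / (π * R ^ 2)
      = ∫ s in p..q, profile R ‖y‖ s := by
  rcases eq_or_ne y 0 with rfl | hy
  · have h1 : ∀ r, R ≤ r → Metric.ball (0 : Plane) r ∩ Metric.ball 0 R = Metric.ball 0 R :=
      fun r hr => inter_eq_right.2 (Metric.ball_subset_ball hr)
    rw [h1 q (hp.trans hpq), h1 p hp, sub_self, norm_zero, eq_comm]
    apply intervalIntegral.integral_zero_ae
    filter_upwards with s hs
    rw [uIoc_of_le hpq] at hs
    exact profile_zero (hp.trans_lt hs.1)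
  have hd : 0 < ‖y‖ := norm_pos_iff.2 hy
  obtain ⟨e, he⟩ := exists_plane_iso y
  set d := ‖y‖ with hdd
  have hsub : Metric.ball (0 : Plane) p ∩ Metric.ball y R ⊆
      Metric.ball (0 : Plane) q ∩ Metric.ball y R :=
    inter_subset_inter_left _ (Metric.ball_subset_ball hpq)
  have hfin : ∀ r, volume (Metric.ball (0 : Plane) r ∩ Metric.ball y R) ≠ ⊤ := fun r =>
    ((measure_mono inter_subset_left).trans_lt measure_ball_lt_top).ne
  have hvol : volume ((Metric.ball (0 : Plane) q ∩ Metric.ball y R) \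
      (Metric.ball (0 : Plane) p ∩ Metric.ball y R)) =
      volume {z : ℂ | ‖z‖ ∈ Ico p q ∧ ‖z - d‖ < R} := by
    rw [← e.measurePreserving.measure_preimage
      ((measurableSet_ball.inter measurableSet_ball).diff
        (measurableSet_ball.inter measurableSet_ball)).nullMeasurableSet]
    congr 1
    ext z
    have h1 : dist (e z) y = ‖z - d‖ := by
      rw [← he, e.dist_map, dist_eq_norm]
    simp only [mem_preimage, mem_sdiff, mem_inter_iff, Metric.mem_ball, dist_zero_right,
      e.norm_map, h1, mem_ofPred_eq, mem_Ico]
    constructor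
    · rintro ⟨⟨a, b⟩, c⟩
      exact ⟨⟨not_lt.1 fun h => c ⟨h, b⟩, a⟩, b⟩
    · rintro ⟨⟨a, b⟩, c⟩
      exact ⟨⟨b, c⟩, fun h => absurd h.1 (not_lt.2 a)⟩
  rw [← sub_div, ← ENNReal.toReal_sub_of_le (measure_mono hsub) (hfin q),
    ← measure_sdiff hsub (measurableSet_ball.inter measurableSet_ball).nullMeasurableSet (hfin p),
    hvol, volume_annulus hR hd hp]
  have hint : IntegrableOn (fun s => 2 * s * arccos ((d ^ 2 + s ^ 2 - R ^ 2) / (2 * d * s)))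
      (Ico p q) := by
    refine (ContinuousOn.integrableOn_Icc ?_).mono_set Ico_subset_Icc_self
    refine ContinuousOn.mul (by fun_prop) ((arcLen_continuousOn hd).mono ?_)
    intro s hs
    exact hR.trans_le (hp.trans hs.1)
  rw [← ofReal_integral_eq_lintegral_ofReal hint, ENNReal.toReal_ofReal,
    integral_Ico_eq_integral_Ioc, ← intervalIntegral.integral_of_le hpq,
    ← intervalIntegral.integral_div]
  · apply intervalIntegral.integral_congr
    intro s hs
    rw [uIcc_of_le hpq] at hs
    simp only [profile_eq hR hd (hp.trans hs.1)]
    ring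
  · refine setIntegral_nonneg measurableSet_Ico fun s hs => ?_
    exact mul_nonneg (by linarith [hp.trans hs.1]) (arccos_nonneg _)
  · refine (ae_restrict_mem measurableSet_Ico).mono fun s hs => ?_
    exact mul_nonneg (by linarith [hp.trans hs.1]) (arccos_nonneg _)

lemma countN_sub {R p q : ℝ} (hR : 0 < R) (hp : R ≤ p) (hpq : p ≤ q) {m : ℕ} (y : Fin m → Plane) :
    countN R y q - countN R y p = ∫ s in p..q, countN' R y s := by
  unfold countN countN'
  rw [← Finset.sum_sub_distrib, intervalIntegral.integral_finsetSum]
  · exact Finset.sum_congr rfl fun l _ => area_sub hR hp hpq (y l)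
  · exact fun l _ => profile_intervalIntegrable hR (norm_nonneg _) hp hpq

lemma countN'_intervalIntegrable {R p q : ℝ} (hR : 0 < R) (hp : R ≤ p) (hpq : p ≤ q) {m : ℕ}
    (y : Fin m → Plane) : IntervalIntegrable (countN' R y) volume p q := by
  have h : countN' R y = ∑ l, profile R ‖y l‖ := by
    ext s
    simp [countN']
  rw [h]
  exact IntervalIntegrable.sum _ fun l _ =>
    profile_intervalIntegrable hR (norm_nonneg _) hp hpq

lemma le_countN_sub {R p q c : ℝ} (hR : 0 < R) (hp : R ≤ p) (hpq : p ≤ q) {m : ℕ}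
    (y : Fin m → Plane) (hc : ∀ s ∈ Ioo p q, c ≤ countN' R y s) :
    (q - p) * c ≤ countN R y q - countN R y p := by
  rw [countN_sub hR hp hpq, ← smul_eq_mul, ← intervalIntegral.integral_const]
  exact intervalIntegral.integral_mono_on_of_le_Ioo hpq intervalIntegrable_const
    (countN'_intervalIntegrable hR hp hpq y) hc

lemma countN_sub_le {R p q c : ℝ} (hR : 0 < R) (hp : R ≤ p) (hpq : p ≤ q) {m : ℕ}
    (y : Fin m → Plane) (hc : ∀ s ∈ Ioo p q, countN' R y s ≤ c) :
    countN R y q - countN R y p ≤ (q - p) * c := by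
  rw [countN_sub hR hp hpq, ← smul_eq_mul, ← intervalIntegral.integral_const]
  exact intervalIntegral.integral_mono_on_of_le_Ioo hpq
    (countN'_intervalIntegrable hR hp hpq y) intervalIntegrable_const hc

lemma profile_nonneg {R d r : ℝ} (hR : 0 < R) (hd : 0 ≤ d) (hr : R < r) : 0 ≤ profile R d r := by
  rcases hd.eq_or_lt with rfl | hd
  · rw [profile_zero hr]
  · rw [profile_eq hR hd hr.le]
    have := arccos_nonneg ((d ^ 2 + r ^ 2 - R ^ 2) / (2 * d * r))
    have : 0 < r := hR.trans hr
    positivity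

lemma profile_le {R L d r : ℝ} (hR : 0 < R) (hd : 0 ≤ d) (hr : R < r) (hL : r ≤ L) :
    profile R d r ≤ 2 * L / R ^ 2 := by
  have hr0 : 0 < r := hR.trans hr
  have hL0 : 0 < L := hr0.trans_le hL
  rcases hd.eq_or_lt with rfl | hd
  · rw [profile_zero hr]; positivity
  · rw [profile_eq hR hd hr.le]
    have h := arccos_le_pi ((d ^ 2 + r ^ 2 - R ^ 2) / (2 * d * r))
    have h0 := arccos_nonneg ((d ^ 2 + r ^ 2 - R ^ 2) / (2 * d * r))
    calc _ ≤ 2 * L / (π * R ^ 2) * π := by gcongr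
      _ = 2 * L / R ^ 2 := by field_simp

/-- The three-point inequality: within a window of length `R / 2`, the profile at a middle point is
at most the sum of its values at the two outer points. -/
lemma profile_three {R d u v w : ℝ} (hR : 0 < R) (hd : 0 ≤ d) (hu : R < u) (huv : u ≤ v)
    (hvw : v ≤ w) (hwu : w ≤ u + R / 2) :
    profile R d v ≤ profile R d u + profile R d w := by
  rcases hd.eq_or_lt with rfl | hd
  · rw [profile_zero hu, profile_zero (hu.trans_le huv),
      profile_zero (hu.trans_le (huv.trans hvw))]; simp
  have hv := hu.le.trans huv
  have hw := hv.trans hvw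
  have key : ∀ r, R ≤ r → profile R d r
      = 2 / (π * R) * (r / R * arccos (arcCos (d / R) (r / R))) := by
    intro r hr
    have hr0 : 0 < r := hR.trans_le hr
    have : (d ^ 2 + r ^ 2 - R ^ 2) / (2 * d * r) = arcCos (d / R) (r / R) := by
      unfold arcCos
      field_simp
    rw [profile_eq hR hd hr, this]
    field_simp
  rw [key u hu.le, key v hv, key w hw, ← mul_add]
  refine mul_le_mul_of_nonneg_left (arc_le (by positivity) ?_ ?_ ?_ ?_) (by positivity)
  · rw [le_div_iff₀ hR]; linarith
  · gcongr
  · gcongr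
  · rw [div_add' _ _ _ hR.ne', div_le_div_iff_of_pos_right hR]; linarith

/-! ### Families of intervals with growing heights -/

/-- A family `B` of intervals `(I.1, I.2)` ordered by an integer index `κ`, with heights `S` at
least the reciprocals of the lengths. To the right of `I`, as long as one stays in the window
`[I.1, I.1 + w]`, a piece of a member has length at most `1 / ((1 - ε) S I)` (`len`), and members
that fit into the window have height at least `(1 - ε) / ε` times that of `I` (`grow`). -/
structure GrowingFamily (B : Set (ℝ × ℝ)) (S : ℝ × ℝ → ℝ) (κ : ℝ × ℝ → ℤ) (w ε : ℝ) : Prop where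
  lt : ∀ I ∈ B, I.1 < I.2
  order : ∀ I ∈ B, ∀ J ∈ B, κ I < κ J → I.2 ≤ J.1
  inj : ∀ I ∈ B, ∀ J ∈ B, κ I = κ J → I = J
  bdd_below : ∃ lo, ∀ I ∈ B, lo ≤ κ I
  bdd_above : ∃ hi, ∀ I ∈ B, κ I ≤ hi
  pos : ∀ I ∈ B, 0 < S I
  height : ∀ I ∈ B, 1 ≤ S I * (I.2 - I.1)
  len : ∀ I ∈ B, ∀ J ∈ B, ∀ t, I.2 ≤ J.1 → J.1 ≤ t → t ≤ J.2 → t ≤ I.1 + w →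
    (t - J.1) * ((1 - ε) * S I) ≤ 1
  grow : ∀ I ∈ B, ∀ J ∈ B, I.2 ≤ J.1 → J.2 ≤ I.1 + w → (1 - ε) * S I ≤ ε * S J

/-- The union of the open intervals of the family `B`. -/
def cover (B : Set (ℝ × ℝ)) : Set ℝ := {r | ∃ I ∈ B, r ∈ Ioo I.1 I.2}

lemma GrowingFamily.mono {B B' : Set (ℝ × ℝ)} {S : ℝ × ℝ → ℝ} {κ : ℝ × ℝ → ℤ} {w ε : ℝ}
    (h : GrowingFamily B S κ w ε) (hB : B' ⊆ B) : GrowingFamily B' S κ w ε where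
  lt I hI := h.lt I (hB hI)
  order I hI J hJ := h.order I (hB hI) J (hB hJ)
  inj I hI J hJ := h.inj I (hB hI) J (hB hJ)
  bdd_below := h.bdd_below.imp fun _ hlo I hI => hlo I (hB hI)
  bdd_above := h.bdd_above.imp fun _ hhi I hI => hhi I (hB hI)
  pos I hI := h.pos I (hB hI)
  height I hI := h.height I (hB hI)
  len I hI J hJ := h.len I (hB hI) J (hB hJ)
  grow I hI J hJ := h.grow I (hB hI) J (hB hJ)

lemma GrowingFamily.exists_least {B : Set (ℝ × ℝ)} {S : ℝ × ℝ → ℝ} {κ : ℝ × ℝ → ℤ} {w ε : ℝ}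
    (h : GrowingFamily B S κ w ε) (P : ℝ × ℝ → Prop) (hP : ∃ I ∈ B, P I) :
    ∃ I ∈ B, P I ∧ ∀ J ∈ B, P J → κ I ≤ κ J := by
  obtain ⟨lo, hlo⟩ := h.bdd_below
  obtain ⟨I₀, h₀, hP₀⟩ := hP
  obtain ⟨k, ⟨I, hI, hPI, rfl⟩, hk⟩ := Int.exists_least_of_bdd
    (P := fun k => ∃ I ∈ B, P I ∧ κ I = k)
    ⟨lo, by rintro _ ⟨I, hI, -, rfl⟩; exact hlo I hI⟩ ⟨_, I₀, h₀, hP₀, rfl⟩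
  exact ⟨I, hI, hPI, fun J hJ hPJ => hk _ ⟨J, hJ, hPJ, rfl⟩⟩

/-- After `I`, the family covers at most `1 / ((1 - 2ε) S I)` of the window of `I`. If `J` is the
first later member, its part in the window costs at most `1 / ((1 - ε) S I)`. What comes after `J`
costs at most `1 / ((1 - 2ε) S J)`, smaller by the factor `ε / (1 - ε)`, and the geometric series
sums up. The induction is on the number of remaining indices. -/
lemma GrowingFamily.volume_after {B : Set (ℝ × ℝ)} {S : ℝ × ℝ → ℝ} {κ : ℝ × ℝ → ℤ} {w ε : ℝ}
    (h : GrowingFamily B S κ w ε) (hε0 : 0 < ε) (hε : ε < 1 / 2) {I : ℝ × ℝ} (hI : I ∈ B) {t : ℝ}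
    (ht : t ≤ I.1 + w) :
    volume (cover B ∩ Icc I.2 t) ≤ ENNReal.ofReal (1 / ((1 - 2 * ε) * S I)) := by
  obtain ⟨hi, hhi⟩ := h.bdd_above
  induction hn : (hi - κ I).toNat using Nat.strong_induction_on generalizing I with
  | _ n ih =>
  have hlater : ∀ J ∈ B, ∀ r ∈ Ioo J.1 J.2, I.2 ≤ r → I.2 ≤ J.1 := by
    intro J hJ r hr hIr
    rcases lt_trichotomy (κ J) (κ I) with hlt | heq | hgt
    · linarith [h.order J hJ I hI hlt, h.lt I hI, hr.2]
    · rw [h.inj J hJ I hI heq] at hr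
      linarith [hr.2]
    · exact h.order I hI J hJ hgt
  by_cases hex : ∃ J ∈ B, I.2 ≤ J.1 ∧ J.1 < t
  · obtain ⟨J, hJ, ⟨hIJ, hJt⟩, hmin⟩ := h.exists_least _ hex
    have hκ : κ I < κ J := by
      by_contra! hle
      rcases hle.lt_or_eq with hlt | heq
      · linarith [h.order J hJ I hI hlt, h.lt I hI, h.lt J hJ]
      · rw [h.inj J hJ I hI heq] at hIJ
        linarith [h.lt I hI]
    have hsub : cover B ∩ Icc I.2 t ⊆ Ioc J.1 (min J.2 t) ∪ (cover B ∩ Icc J.2 t) := by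
      rintro r ⟨⟨J', hJ', hr⟩, hr1, hr2⟩
      have hk := hmin J' hJ' ⟨hlater J' hJ' r hr hr1, hr.1.trans_le hr2⟩
      rcases hk.eq_or_lt with heq | hlt
      · rw [← h.inj J hJ J' hJ' heq] at hr
        exact Or.inl ⟨hr.1, le_min hr.2.le hr2⟩
      · exact Or.inr ⟨⟨J', hJ', hr⟩, (h.order J hJ J' hJ' hlt).trans hr.1.le, hr2⟩
    have hS := h.pos I hI
    have hSJ := h.pos J hJ
    have e1 : 0 < 1 - ε := by linarith
    have e2 : 0 < 1 - 2 * ε := by linarith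
    have hA : volume (Ioc J.1 (min J.2 t)) ≤ ENNReal.ofReal (1 / ((1 - ε) * S I)) := by
      rw [Real.volume_Ioc]
      apply ENNReal.ofReal_le_ofReal
      rw [le_div_iff₀ (by positivity)]
      exact h.len I hI J hJ _ hIJ (le_min (h.lt J hJ).le hJt.le) (min_le_left _ _)
        ((min_le_right _ _).trans ht)
    have hB : volume (cover B ∩ Icc J.2 t) ≤
        ENNReal.ofReal (ε / (1 - ε) * (1 / ((1 - 2 * ε) * S I))) := by
      rcases le_or_gt t J.2 with hle | hlt
      · refine (measure_mono inter_subset_right).trans ?_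
        rw [Real.volume_Icc, ENNReal.ofReal_of_nonpos (by linarith)]
        exact zero_le
      · have hlt' : (hi - κ J).toNat < n := by
          have := hhi J hJ
          omega
        refine (ih _ hlt' hJ (by linarith [h.lt I hI]) rfl).trans (ENNReal.ofReal_le_ofReal ?_)
        have hg := h.grow I hI J hJ hIJ (by linarith)
        rw [div_mul_div_comm, mul_one, div_le_div_iff₀ (by positivity) (by positivity)]
        nlinarith [mul_le_mul_of_nonneg_left hg e2.le]
    calc volume (cover B ∩ Icc I.2 t)
        ≤ volume (Ioc J.1 (min J.2 t)) + volume (cover B ∩ Icc J.2 t) :=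
          (measure_mono hsub).trans (measure_union_le _ _)
      _ ≤ _ := add_le_add hA hB
      _ = ENNReal.ofReal (1 / ((1 - 2 * ε) * S I)) := by
          rw [← ENNReal.ofReal_add (by positivity) (by positivity)]
          congr 1
          rw [div_mul_div_comm, div_add_div _ _ (by positivity) (by positivity),
            div_eq_div_iff (by positivity) (by positivity)]
          ring
  · have : cover B ∩ Icc I.2 t = ∅ := by
      ext r
      simp only [mem_inter_iff, mem_empty_iff_false, iff_false]
      rintro ⟨⟨J, hJ, hr⟩, hr1, hr2⟩
      exact hex ⟨J, hJ, hlater J hJ r hr hr1, hr.1.trans_le hr2⟩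
    simp [this]

/-- A window of length `w` meets a growing family in measure less than `ℓ (2 - 2ε) / (1 - 2ε)` if
all members are shorter than `ℓ`: the first member `I` meeting the window contributes at most its
length, and the later ones at most `1 / ((1 - 2ε) S I) ≤ (I.2 - I.1) / (1 - 2ε)`. -/
lemma GrowingFamily.volume_window {B : Set (ℝ × ℝ)} {S : ℝ × ℝ → ℝ} {κ : ℝ × ℝ → ℤ} {w ε ℓ a b : ℝ}
    (h : GrowingFamily B S κ w ε) (hε0 : 0 < ε) (hε : ε < 1 / 2) (hℓ0 : 0 < ℓ)
    (hℓ : ∀ I ∈ B, I.2 - I.1 < ℓ) (hab : b - a = w) :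
    volume (cover B ∩ Icc a b) < ENNReal.ofReal (ℓ * (2 - 2 * ε) / (1 - 2 * ε)) := by
  have e1 : 0 < 2 - 2 * ε := by linarith
  have e2 : 0 < 1 - 2 * ε := by linarith
  by_cases hex : ∃ I ∈ B, I.1 < b ∧ a < I.2
  · obtain ⟨I, hI, ⟨hIb, hIa⟩, hmin⟩ := h.exists_least _ hex
    -- if `I` starts before `a`, the window sticks out of that of `I` by `a - I.1`, exactly what
    -- is saved on `I` itself
    have hsub : cover B ∩ Icc a b ⊆ Icc (max a I.1) I.2 ∪
        (cover B ∩ Icc I.2 (I.1 + w)) ∪ Icc (I.1 + w) b := by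
      rintro r ⟨⟨J, hJ, hr⟩, hr1, hr2⟩
      rcases (hmin J hJ ⟨hr.1.trans_le hr2, hr1.trans_lt hr.2⟩).eq_or_lt with heq | hlt
      · rw [← h.inj I hI J hJ heq] at hr
        exact Or.inl (Or.inl ⟨max_le hr1 hr.1.le, hr.2.le⟩)
      · rcases le_total r (I.1 + w) with hle | hge
        · exact Or.inl (Or.inr
            ⟨⟨J, hJ, hr⟩, (h.order I hI J hJ hlt).trans hr.1.le, hle⟩)
        · exact Or.inr ⟨hge, hr2⟩
    have hS := h.pos I hI
    have hlt := h.lt I hI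
    have hinv : 1 / ((1 - 2 * ε) * S I) ≤ (I.2 - I.1) / (1 - 2 * ε) := by
      rw [div_le_div_iff₀ (by positivity) (by positivity)]
      nlinarith [mul_le_mul_of_nonneg_left (h.height I hI) e2.le]
    have hmax : 0 ≤ I.2 - max a I.1 := sub_nonneg.2 (max_le hIa.le hlt.le)
    calc volume (cover B ∩ Icc a b)
        ≤ volume (Icc (max a I.1) I.2) + volume (cover B ∩ Icc I.2 (I.1 + w))
          + volume (Icc (I.1 + w) b) :=
          ((measure_mono hsub).trans (measure_union_le _ _)).trans
            (by gcongr; exact measure_union_le _ _)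
      _ ≤ ENNReal.ofReal (I.2 - max a I.1) + ENNReal.ofReal ((I.2 - I.1) / (1 - 2 * ε))
          + ENNReal.ofReal (max a I.1 - I.1) := by
          gcongr
          · rw [Real.volume_Icc]
          · exact (h.volume_after hε0 hε hI le_rfl).trans (ENNReal.ofReal_le_ofReal hinv)
          · rw [Real.volume_Icc]
            apply ENNReal.ofReal_le_ofReal
            linarith [le_max_left a I.1]
      _ = ENNReal.ofReal ((I.2 - I.1) * (2 - 2 * ε) / (1 - 2 * ε)) := by
          have h1 : 0 ≤ (I.2 - I.1) / (1 - 2 * ε) := div_nonneg (by linarith) e2.le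
          rw [← ENNReal.ofReal_add hmax h1,
            ← ENNReal.ofReal_add (add_nonneg hmax h1) (by linarith [le_max_right a I.1])]
          congr 1
          field_simp
          ring
      _ < _ := by
          rw [ENNReal.ofReal_lt_ofReal_iff (by positivity)]
          have := hℓ I hI
          gcongr
  · have : cover B ∩ Icc a b = ∅ := by
      ext r
      simp only [mem_inter_iff, mem_empty_iff_false, iff_false]
      rintro ⟨⟨J, hJ, hr⟩, hr1, hr2⟩
      exact hex ⟨J, hJ, hr.1.trans_le hr2, hr1.trans_lt hr.2⟩
    rw [this, measure_empty, ENNReal.ofReal_pos]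
    positivity

/-! ### Bad intervals of a counting function -/

/-- A function `N` with derivative `g` on `[R, ∞)`, the latter nonnegative, bounded by `M` on
`(R, L]` and satisfying the three-point inequality in windows of length `R / 2`. Only the two
mean value inequalities are recorded of the relation between `N` and `g`. -/
structure CountingPair (R L M : ℝ) (N g : ℝ → ℝ) : Prop where
  radius_pos : 0 < R
  nonneg : ∀ r, R < r → 0 ≤ g r
  le_bound : ∀ r, R < r → r ≤ L → g r ≤ M
  three : ∀ u v w, R < u → u ≤ v → v ≤ w → w ≤ u + R / 2 → g v ≤ g u + g w
  le_sub : ∀ p q c, R ≤ p → p ≤ q → (∀ s ∈ Ioo p q, c ≤ g s) → (q - p) * c ≤ N q - N p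
  sub_le : ∀ p q c, R ≤ p → p ≤ q → (∀ s ∈ Ioo p q, g s ≤ c) → N q - N p ≤ (q - p) * c

/-- The interval `(I.1, I.2)` has integer values of `N` at its endpoints and none inside, and
`inf g < ε sup g` on it. Of the conditions defining a bad interval, the length bound is kept
separate and those on the effective coupling play no role. -/
structure IsBad (R L ε : ℝ) (N g : ℝ → ℝ) (I : ℝ × ℝ) : Prop where
  left : R ≤ I.1
  lt : I.1 < I.2
  right : I.2 ≤ L
  int_left : ∃ k : ℤ, N I.1 = k
  int_right : ∃ k : ℤ, N I.2 = k
  avoid : ∀ s ∈ Ioo I.1 I.2, ∀ k : ℤ, N s ≠ k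
  inf_lt : sInf (g '' Ioo I.1 I.2) < ε * sSup (g '' Ioo I.1 I.2)

section
variable {R L M ε : ℝ} {N g : ℝ → ℝ} {I J : ℝ × ℝ}

lemma CountingPair.mono (h : CountingPair R L M N g) {p q : ℝ} (hp : R ≤ p) (hpq : p ≤ q) :
    N p ≤ N q := by
  have := h.le_sub p q 0 hp hpq fun s hs => h.nonneg s (hp.trans_lt hs.1)
  linarith

lemma CountingPair.continuousOn (h : CountingPair R L M N g) : ContinuousOn N (Icc R L) := by
  have : LipschitzOnWith M.toNNReal N (Icc R L) := by
    apply LipschitzOnWith.of_le_add_mul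
    intro x hx y hy
    rcases le_total y x with hyx | hxy
    · have := h.sub_le y x M hy.1 hyx
        fun s hs => h.le_bound s (hy.1.trans_lt hs.1) (hs.2.le.trans hx.2)
      have h1 : M ≤ (M.toNNReal : ℝ) := Real.le_coe_toNNReal M
      rw [Real.dist_eq, abs_of_nonneg (by linarith)]
      nlinarith
    · have := h.mono hx.1 hxy
      have : 0 ≤ (M.toNNReal : ℝ) * dist x y := by positivity
      linarith
  exact this.continuousOn

lemma IsBad.bddAbove (hI : IsBad R L ε N g I) (h : CountingPair R L M N g) :
    BddAbove (g '' Ioo I.1 I.2) := by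
  refine ⟨M, ?_⟩
  rintro _ ⟨r, hr, rfl⟩
  exact h.le_bound r (hI.left.trans_lt hr.1) (hr.2.le.trans hI.right)

lemma IsBad.bddBelow (hI : IsBad R L ε N g I) (h : CountingPair R L M N g) :
    BddBelow (g '' Ioo I.1 I.2) := by
  refine ⟨0, ?_⟩
  rintro _ ⟨r, hr, rfl⟩
  exact h.nonneg r (hI.left.trans_lt hr.1)

lemma IsBad.floor_left (hI : IsBad R L ε N g I) : N I.1 = ⌊N I.1⌋ := by
  obtain ⟨k, hk⟩ := hI.int_left
  rw [hk, Int.floor_intCast]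

/-- `N` is monotone and continuous, so it increases by exactly one across a bad interval. -/
lemma IsBad.jump (hI : IsBad R L ε N g I) (h : CountingPair R L M N g) :
    N I.2 = N I.1 + 1 := by
  obtain ⟨k₁, h₁⟩ := hI.int_left
  obtain ⟨k₂, h₂⟩ := hI.int_right
  have hmid : (I.1 + I.2) / 2 ∈ Ioo I.1 I.2 := by
    constructor <;> linarith [hI.lt]
  have m1 := h.mono hI.left hmid.1.le
  have m2 := h.mono (hI.left.trans hmid.1.le) hmid.2.le
  have hle : k₁ < k₂ := by
    have : k₁ ≤ k₂ := by
      have := m1.trans m2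
      rw [h₁, h₂] at this
      exact_mod_cast this
    refine lt_of_le_of_ne this fun heq => hI.avoid _ hmid k₁ (le_antisymm ?_ (h₁ ▸ m1))
    rw [heq, ← h₂]; exact m2
  have hge : k₂ ≤ k₁ + 1 := by
    by_contra! hgt
    have hmem : ((k₁ + 1 : ℤ) : ℝ) ∈ Icc (N I.1) (N I.2) := by
      rw [h₁, h₂]
      constructor
      · exact_mod_cast (by omega : k₁ ≤ k₁ + 1)
      · exact_mod_cast hgt.le
    obtain ⟨s, hs, hNs⟩ := intermediate_value_Icc hI.lt.le
      (h.continuousOn.mono (Icc_subset_Icc hI.left hI.right)) hmem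
    refine hI.avoid s ⟨lt_of_le_of_ne hs.1 ?_, lt_of_le_of_ne hs.2 ?_⟩ _ hNs
    · rintro rfl
      rw [h₁] at hNs
      have : k₁ = k₁ + 1 := by exact_mod_cast hNs
      omega
    · rintro rfl
      rw [h₂] at hNs
      have : k₂ = k₁ + 1 := by exact_mod_cast hNs
      omega
  have : k₂ = k₁ + 1 := by omega
  rw [h₁, h₂, this]; push_cast; rfl

lemma IsBad.le_of_lt (hI : IsBad R L ε N g I) (hJ : IsBad R L ε N g J)
    (h : CountingPair R L M N g) (hlt : N I.1 < N J.1) : I.2 ≤ J.1 := by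
  by_contra! hc
  obtain ⟨k, hk⟩ := hJ.int_left
  rcases le_or_gt J.1 I.1 with hle | hgt
  · linarith [h.mono hJ.left hle]
  · exact hI.avoid _ ⟨hgt, hc⟩ k hk

lemma IsBad.eq_of_eq (hI : IsBad R L ε N g I) (hJ : IsBad R L ε N g J)
    (h : CountingPair R L M N g) (heq : N I.1 = N J.1) : I = J := by
  have key : ∀ I J : ℝ × ℝ, IsBad R L ε N g I → IsBad R L ε N g J → N I.1 = N J.1 →
      J.1 ≤ I.1 := by
    intro I J hI hJ heq
    by_contra! hc
    obtain ⟨k, hk⟩ := hJ.int_left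
    have : I.2 ≤ J.1 := by
      by_contra! hc'
      exact hI.avoid _ ⟨hc, hc'⟩ k hk
    linarith [h.mono (hI.left.trans hI.lt.le) this, hI.jump h]
  have h1 : I.1 = J.1 := le_antisymm (key J I hJ hI heq.symm) (key I J hI hJ heq)
  have key2 : ∀ I J : ℝ × ℝ, IsBad R L ε N g I → IsBad R L ε N g J → I.1 = J.1 →
      J.2 ≤ I.2 := by
    intro I J hI hJ heq
    by_contra! hc
    obtain ⟨k, hk⟩ := hI.int_right
    exact hJ.avoid _ ⟨heq ▸ hI.lt, hc⟩ k hk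
  exact Prod.ext h1 (le_antisymm (key2 J I hJ hI h1.symm) (key2 I J hI hJ h1))

lemma IsBad.height (hI : IsBad R L ε N g I) (h : CountingPair R L M N g) :
    1 ≤ sSup (g '' Ioo I.1 I.2) * (I.2 - I.1) := by
  have := h.sub_le I.1 I.2 (sSup (g '' Ioo I.1 I.2)) hI.left hI.lt.le
    fun s hs => le_csSup (hI.bddAbove h) (mem_image_of_mem g hs)
  linarith [hI.jump h]

lemma IsBad.sup_pos (hI : IsBad R L ε N g I) (h : CountingPair R L M N g) :
    0 < sSup (g '' Ioo I.1 I.2) := by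
  have := hI.height h
  by_contra! hc
  nlinarith [hI.lt]

/-- To the right of `I`, up to `I.1 + R / 2`, `g` is at least `(1 - ε) sup_I g`. -/
def IsUp (R ε : ℝ) (g : ℝ → ℝ) (I : ℝ × ℝ) : Prop :=
  ∀ r, I.2 ≤ r → r ≤ I.1 + R / 2 → (1 - ε) * sSup (g '' Ioo I.1 I.2) ≤ g r

/-- To the left of `I`, down to `I.2 - R / 2` and beyond `R`, `g` is at least `(1 - ε) sup_I g`. -/
def IsDown (R ε : ℝ) (g : ℝ → ℝ) (I : ℝ × ℝ) : Prop :=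
  ∀ r, R < r → r ≤ I.1 → I.2 ≤ r + R / 2 → (1 - ε) * sSup (g '' Ioo I.1 I.2) ≤ g r

/-- If `g` were small at `q` on the left and at `p` on the right, then, for points `x`, `x'` of `I`
with `g x` near the infimum and `g x'` near the supremum, the three-point inequality would fail for
`(x, x', p)` or for `(q, x', x)`. -/
lemma IsBad.isUp_or_isDown (hI : IsBad R L ε N g I) (h : CountingPair R L M N g) :
    IsUp R ε g I ∨ IsDown R ε g I := by
  by_contra! hc
  obtain ⟨hu, hd⟩ := hc
  unfold IsUp at hu
  unfold IsDown at hd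
  push Not at hu hd
  obtain ⟨p, hp1, hp2, hp⟩ := hu
  obtain ⟨q, hq1, hq2, hq3, hq⟩ := hd
  set S := sSup (g '' Ioo I.1 I.2)
  set s := sInf (g '' Ioo I.1 I.2)
  have hs := hI.inf_lt
  have hne : (g '' Ioo I.1 I.2).Nonempty := (nonempty_Ioo.2 hI.lt).image g
  set δ := max (g p) (g q)
  have hδ : δ < S - s := max_lt (by linarith) (by linarith)
  obtain ⟨_, ⟨x', hx', rfl⟩, hgx'⟩ := exists_lt_of_lt_csSup hne
    (show S - (S - s - δ) / 2 < S by linarith)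
  obtain ⟨_, ⟨x, hx, rfl⟩, hgx⟩ := exists_lt_of_csInf_lt hne
    (show s < s + (S - s - δ) / 2 by linarith)
  have hdp : g p ≤ δ := le_max_left _ _
  have hdq : g q ≤ δ := le_max_right _ _
  rcases le_total x x' with hle | hle
  · linarith [h.three x x' p (hI.left.trans_lt hx.1) hle (by linarith [hx'.2])
      (by linarith [hx.1])]
  · linarith [h.three q x' x hq1 (by linarith [hx'.1]) hle (by linarith [hx.2])]

/-- The bad intervals satisfying `IsUp` form a growing family, indexed by the value of `N` at the
left endpoint. -/
lemma CountingPair.growing_up (h : CountingPair R L M N g) :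
    GrowingFamily {I | IsBad R L ε N g I ∧ IsUp R ε g I} (fun I => sSup (g '' Ioo I.1 I.2))
      (fun I => ⌊N I.1⌋) (R / 2) ε where
  lt I hI := hI.1.lt
  order I hI J hJ hlt := hI.1.le_of_lt hJ.1 h (by
    rw [hI.1.floor_left, hJ.1.floor_left]; exact_mod_cast hlt)
  inj I hI J hJ heq := hI.1.eq_of_eq hJ.1 h (by
    rw [hI.1.floor_left, hJ.1.floor_left]; exact_mod_cast heq)
  bdd_below := ⟨⌊N R⌋, fun I hI => Int.floor_le_floor (h.mono le_rfl hI.1.left)⟩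
  bdd_above := ⟨⌊N L⌋, fun I hI =>
    Int.floor_le_floor (h.mono hI.1.left (hI.1.lt.le.trans hI.1.right))⟩
  pos I hI := hI.1.sup_pos h
  height I hI := hI.1.height h
  len I hI J hJ t hIJ h1 h2 ht := by
    have := h.le_sub J.1 t _ hJ.1.left h1 fun s hs =>
      hI.2 s (hIJ.trans hs.1.le) (hs.2.le.trans ht)
    linarith [hJ.1.jump h, h.mono (hJ.1.left.trans h1) h2]
  grow I hI J hJ hIJ ht := by
    refine le_trans (le_csInf ((nonempty_Ioo.2 hJ.1.lt).image g) ?_) hJ.1.inf_lt.le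
    rintro _ ⟨s, hs, rfl⟩
    exact hI.2 s (hIJ.trans hs.1.le) (hs.2.le.trans ht)

/-- The image of an interval under `r ↦ -r`. -/
def reflect (I : ℝ × ℝ) : ℝ × ℝ := (-I.2, -I.1)

lemma reflect_reflect (I : ℝ × ℝ) : reflect (reflect I) = I := by simp [reflect]

/-- Seen from right to left, the bad intervals satisfying `IsDown` form a growing family. The index
is negated along with the interval. -/
lemma CountingPair.growing_down (h : CountingPair R L M N g) :
    GrowingFamily {I | IsBad R L ε N g (reflect I) ∧ IsDown R ε g (reflect I)}
      (fun I => sSup (g '' Ioo (reflect I).1 (reflect I).2))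
      (fun I => -⌊N (reflect I).1⌋) (R / 2) ε where
  lt I hI := by simpa [reflect] using hI.1.lt
  order I hI J hJ hlt := by
    have := hJ.1.le_of_lt hI.1 h (by
      rw [hI.1.floor_left, hJ.1.floor_left]; exact_mod_cast neg_lt_neg_iff.1 hlt)
    simpa [reflect] using this
  inj I hI J hJ heq := by
    have := hI.1.eq_of_eq hJ.1 h (by
      rw [hI.1.floor_left, hJ.1.floor_left]; exact_mod_cast neg_inj.1 heq)
    rw [← reflect_reflect I, this, reflect_reflect]
  bdd_below := ⟨-⌊N L⌋, fun I hI => neg_le_neg <|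
    Int.floor_le_floor (h.mono hI.1.left (hI.1.lt.le.trans hI.1.right))⟩
  bdd_above := ⟨-⌊N R⌋, fun I hI => neg_le_neg <| Int.floor_le_floor (h.mono le_rfl hI.1.left)⟩
  pos I hI := hI.1.sup_pos h
  height I hI := by
    have := hI.1.height h
    rwa [show (reflect I).2 - (reflect I).1 = I.2 - I.1 by simp [reflect]; ring] at this
  len I hI J hJ t hIJ h1 h2 ht := by
    have e1 : (reflect J).1 = -J.2 := rfl
    have e2 : (reflect J).2 = -J.1 := rfl
    have e3 : (reflect I).1 = -I.2 := rfl
    have e4 : (reflect I).2 = -I.1 := rfl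
    have hl := hJ.1.left
    have := h.le_sub (-t) (reflect J).2 _ (by linarith) (by linarith) fun s hs =>
      hI.2 s (by linarith [hs.1]) (by linarith [hs.2]) (by linarith [hs.1])
    have h3 := h.mono hl (show (reflect J).1 ≤ -t by linarith)
    rw [show t - J.1 = (reflect J).2 - -t by linarith]
    linarith [hJ.1.jump h]
  grow I hI J hJ hIJ ht := by
    have e1 : (reflect J).1 = -J.2 := rfl
    have e2 : (reflect J).2 = -J.1 := rfl
    have e3 : (reflect I).1 = -I.2 := rfl
    have e4 : (reflect I).2 = -I.1 := rfl
    have hl := hJ.1.left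
    refine le_trans (le_csInf ((nonempty_Ioo.2 hJ.1.lt).image g) ?_) hJ.1.inf_lt.le
    rintro _ ⟨s, hs, rfl⟩
    exact hI.2 s (by linarith [hs.1]) (by linarith [hs.2]) (by linarith [hs.1])

end

lemma countingPair {R L : ℝ} (hR : 0 < R) {m : ℕ} (y : Fin m → Plane) :
    CountingPair R L (∑ _l : Fin m, 2 * L / R ^ 2) (countN R y) (countN' R y) where
  radius_pos := hR
  nonneg r hr := Finset.sum_nonneg fun _ _ => profile_nonneg hR (norm_nonneg _) hr
  le_bound r hr hL := Finset.sum_le_sum fun _ _ => profile_le hR (norm_nonneg _) hr hL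
  three u v w hu huv hvw hwu := by
    unfold countN'
    rw [← Finset.sum_add_distrib]
    exact Finset.sum_le_sum fun _ _ => profile_three hR (norm_nonneg _) hu huv hvw hwu
  le_sub p q c hp hpq hc := le_countN_sub hR hp hpq y hc
  sub_le p q c hp hpq hc := countN_sub_le hR hp hpq y hc

/-- **Bad intervals** (Lemma 4.10).  An open interval `I = (z⁻, z⁺) ⊆ (R, L]` is *bad*
if `𝒩(z⁻), 𝒩(z⁺) ∈ ℤ`, `𝒩 ∉ ℤ` on `I`, `ρ` vanishes somewhere on `I` and equals
`|Φ̂ - 2q|²` on `I` for a fixed `q ∈ ℤ`, `|I| < CR`, and `inf_I 𝒩' < (C²/π) sup_I 𝒩'`.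
Then for every interval `J ⊆ (R, L]` of length `R/2`, the Lebesgue measure of the part
of `J` covered by bad intervals is less than `(8C(π - C²)/(π - 2C²)) |J|`. -/
theorem bad_intervals
    (R L α : ℝ) (hR : 0 < R) (hL : R < L) (hα : α ≠ 0) (m : ℕ) (y : Fin m → Plane)
    (C : ℝ) (hC0 : 0 < C) (hC : C < Real.sqrt (π / 2))
    (a b : ℝ) (hab : b - a = R / 2) (hJ : Set.Icc a b ⊆ Set.Ioc R L) :
    (volume (Set.Icc a b ∩
      {r : ℝ | ∃ z₁ z₂ : ℝ, r ∈ Set.Ioo z₁ z₂ ∧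
        R ≤ z₁ ∧ z₁ < z₂ ∧ z₂ ≤ L ∧
        (∃ k : ℤ, countN R y z₁ = k) ∧ (∃ k : ℤ, countN R y z₂ = k) ∧
        (∀ s ∈ Set.Ioo z₁ z₂, ∀ k : ℤ, countN R y s ≠ k) ∧
        (∃ s ∈ Set.Ioo z₁ z₂, rhoFun α R y s = 0) ∧
        (∃ q : ℤ, ∀ s ∈ Set.Ioo z₁ z₂,
          rhoFun α R y s = (α * (1 + 2 * countN R y s) - 2 * q) ^ 2) ∧
        z₂ - z₁ < C * R ∧
        sInf (countN' R y '' Set.Ioo z₁ z₂)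
          < C ^ 2 / π * sSup (countN' R y '' Set.Ioo z₁ z₂)})).toReal
    < 8 * C * (π - C ^ 2) / (π - 2 * C ^ 2) * (R / 2) := by
  have hsq : C ^ 2 < π / 2 := by
    rw [← Real.sq_sqrt (show (0 : ℝ) ≤ π / 2 by positivity)]
    gcongr
  set ε := C ^ 2 / π with hεdef
  have hε0 : 0 < ε := by positivity
  have hε : ε < 1 / 2 := by
    rw [hεdef, div_lt_iff₀ pi_pos]; linarith
  have hℓ0 : 0 < C * R := by positivity
  have h := countingPair (L := L) hR y
  set N := countN R y
  set g := countN' R y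
  -- restricting to intervals shorter than `C * R` keeps the family growing
  have up := (h.growing_up (ε := ε)).mono
    (B' := {I | (IsBad R L ε N g I ∧ IsUp R ε g I) ∧ I.2 - I.1 < C * R}) fun _ hI => hI.1
  have down := (h.growing_down (ε := ε)).mono
    (B' := {I | (IsBad R L ε N g (reflect I) ∧ IsDown R ε g (reflect I)) ∧ I.2 - I.1 < C * R})
    fun _ hI => hI.1
  have vup := up.volume_window (a := a) (b := b) hε0 hε hℓ0 (fun _ hI => hI.2) hab
  have vdown := down.volume_window (a := -b) (b := -a) hε0 hε hℓ0 (fun _ hI => hI.2)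
    (by linarith)
  rw [← Measure.measure_preimage_neg] at vdown
  refine lt_of_lt_of_eq ((ENNReal.toReal_lt_toReal ?_ ?_).2 (lt_of_le_of_lt
    ((measure_mono ?_).trans (measure_union_le _ _)) (ENNReal.add_lt_add vup vdown))) ?_
  · exact ((measure_mono inter_subset_left).trans_lt measure_Icc_lt_top).ne
  · exact ENNReal.add_ne_top.2 ⟨ENNReal.ofReal_ne_top, ENNReal.ofReal_ne_top⟩
  · rintro r ⟨hr, z₁, z₂, hz, hz1, hlt, hz2, hk1, hk2, hav, -, -, hlen, hinf⟩
    have hI : IsBad R L ε N g (z₁, z₂) := ⟨hz1, hlt, hz2, hk1, hk2, hav, hinf⟩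
    rcases hI.isUp_or_isDown h with hu | hd
    · exact Or.inl ⟨⟨(z₁, z₂), ⟨⟨hI, hu⟩, hlen⟩, hz⟩, hr⟩
    · have hf : reflect (reflect (z₁, z₂)) = (z₁, z₂) := reflect_reflect _
      refine Or.inr ⟨⟨reflect (z₁, z₂), ⟨⟨by rwa [hf], by rwa [hf]⟩, ?_⟩, ?_⟩, ?_⟩
      · simp only [reflect]; linarith
      · exact ⟨neg_lt_neg hz.2, neg_lt_neg hz.1⟩
      · exact ⟨neg_le_neg hr.2, neg_le_neg hr.1⟩
  · have e1 : 0 < 2 - 2 * ε := by linarith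
    have e2 : 0 < 1 - 2 * ε := by linarith
    have e3 : 0 < π - 2 * C ^ 2 := by linarith
    have hq : (2 - 2 * ε) / (1 - 2 * ε) = 2 * (π - C ^ 2) / (π - 2 * C ^ 2) := by
      have : C ^ 2 = ε * π := by rw [hεdef]; field_simp
      rw [div_eq_div_iff e2.ne' e3.ne', this]
      ring
    rw [← ENNReal.ofReal_add (by positivity) (by positivity), ENNReal.toReal_ofReal (by positivity),
      mul_div_assoc, hq]
    ring
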